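/- arXiv:1611.02292 — 8 statements merged into one kernel-verified Lean document; each statement's English description precedes it below -/
import Mathlib

section
/- Let E ⊆ V be a subspace, let A ⊆ Ann(E) be a subspace of ∧^k V*, and let ε : E → (∧^k V*)/A be a linear map that is E-skew, meaning: for all X, Y ∈ E and all α, β ∈ ∧^k V* with α + A = ε(X) and β + A = ε(Y), one has i_Y α = − i_X β. Then L(E,A,ε) := {(X,α) ∈ V ⊕ ∧^k V* : X ∈ E and α + A = ε(X)} is an isotropic subspace of V ⊕ ∧^k V*. -/
open Module Submodule

noncomputable section

/-- `∧^m V^*`, modeled as alternating `m`-linear forms on `V`. -/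
abbrev Alt (V : Type*) [AddCommGroup V] [Module ℝ V] (m : ℕ) :=
  V [⋀^Fin m]→ₗ[ℝ] ℝ

/-- The interior product `i_X : ∧^{m+1} V^* → ∧^m V^*`, as a linear map in the form. -/
def iprod (V : Type*) [AddCommGroup V] [Module ℝ V] (m : ℕ) (X : V) :
    Alt V (m + 1) →ₗ[ℝ] Alt V m :=
  AlternatingMap.curryLeftLinearMap.flip X

lemma iprod_add_left {V : Type*} [AddCommGroup V] [Module ℝ V] (m : ℕ) (X Y : V)
    (α : Alt V (m + 1)) : iprod V m (X + Y) α = iprod V m X α + iprod V m Y α := by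
  simp [iprod]

lemma iprod_smul_left {V : Type*} [AddCommGroup V] [Module ℝ V] (m : ℕ) (c : ℝ) (X : V)
    (α : Alt V (m + 1)) : iprod V m (c • X) α = c • iprod V m X α := by
  simp [iprod]

/-- The `∧^m V^*`-valued pairing on `W = V ⊕ ∧^{m+1} V^*`:
`⟨(X,α),(Y,β)⟩ = i_X β + i_Y α`. -/
def pairW (V : Type*) [AddCommGroup V] [Module ℝ V] (m : ℕ)
    (u v : V × Alt V (m + 1)) : Alt V m :=
  iprod V m u.1 v.2 + iprod V m v.1 u.2

lemma pairW_add_left {V : Type*} [AddCommGroup V] [Module ℝ V] (m : ℕ)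
    (u u' v : V × Alt V (m + 1)) :
    pairW V m (u + u') v = pairW V m u v + pairW V m u' v := by
  simp only [pairW, Prod.fst_add, Prod.snd_add, iprod_add_left, map_add]
  abel

lemma pairW_smul_left {V : Type*} [AddCommGroup V] [Module ℝ V] (m : ℕ) (c : ℝ)
    (u v : V × Alt V (m + 1)) :
    pairW V m (c • u) v = c • pairW V m u v := by
  simp only [pairW, Prod.smul_fst, Prod.smul_snd, iprod_smul_left, map_smul, smul_add]

/-- A subspace of `W = V ⊕ ∧^{m+1}V^*` is isotropic if the pairing vanishes on it. -/
def IsIsotropic (V : Type*) [AddCommGroup V] [Module ℝ V] (m : ℕ)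
    (L : Submodule ℝ (V × Alt V (m + 1))) : Prop :=
  ∀ u ∈ L, ∀ v ∈ L, pairW V m u v = 0

/-- The orthogonal `L^⊥` of a subspace `L ⊆ V ⊕ ∧^{m+1}V^*` w.r.t. the pairing. -/
def perpW (V : Type*) [AddCommGroup V] [Module ℝ V] (m : ℕ)
    (L : Submodule ℝ (V × Alt V (m + 1))) : Submodule ℝ (V × Alt V (m + 1)) where
  carrier := {w | ∀ l ∈ L, pairW V m w l = 0}
  add_mem' := by
    intro a b ha hb l hl
    rw [pairW_add_left, ha l hl, hb l hl, add_zero]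
  zero_mem' := by
    intro l hl
    simp [pairW, iprod]
  smul_mem' := by
    intro c a ha l hl
    rw [pairW_smul_left, ha l hl, smul_zero]

/-- The annihilator `Ann(E) ⊆ ∧^{m+1} V^*` of a subspace `E ⊆ V`. -/
def AnnE (V : Type*) [AddCommGroup V] [Module ℝ V] (m : ℕ) (E : Submodule ℝ V) :
    Submodule ℝ (Alt V (m + 1)) where
  carrier := {α | ∀ X ∈ E, iprod V m X α = 0}
  add_mem' := by
    intro a b ha hb X hX
    rw [map_add, ha X hX, hb X hX, add_zero]
  zero_mem' := by intro X hX; simp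
  smul_mem' := by
    intro c a ha X hX
    rw [map_smul, ha X hX, smul_zero]

/-- The annihilator `S° ⊆ V` of a subspace `S ⊆ ∧^{m+1} V^*`. -/
def polarS (V : Type*) [AddCommGroup V] [Module ℝ V] (m : ℕ)
    (S : Submodule ℝ (Alt V (m + 1))) : Submodule ℝ V where
  carrier := {X | ∀ α ∈ S, iprod V m X α = 0}
  add_mem' := by
    intro a b ha hb α hα
    show iprod V m (a + b) α = 0
    rw [iprod_add_left, ha α hα, hb α hα, add_zero]
  zero_mem' := by
    intro α hα
    show iprod V m 0 α = 0
    simp [iprod]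
  smul_mem' := by
    intro c a ha α hα
    show iprod V m (c • a) α = 0
    rw [iprod_smul_left, ha α hα, smul_zero]

/-- The `B`-field transform `e^B (X, α) = (X, α + i_X B)`. -/
def eB (V : Type*) [AddCommGroup V] [Module ℝ V] (m : ℕ) (B : Alt V (m + 2)) :
    (V × Alt V (m + 1)) →ₗ[ℝ] (V × Alt V (m + 1)) :=
  LinearMap.prod (LinearMap.fst ℝ V (Alt V (m + 1)))
    (LinearMap.snd ℝ V (Alt V (m + 1)) + B.curryLeft.comp (LinearMap.fst ℝ V (Alt V (m + 1))))

/-- The projection `pr₁(L) ⊆ V` of a subspace `L ⊆ V ⊕ ∧^{m+1}V^*`. -/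
def pr1 (V : Type*) [AddCommGroup V] [Module ℝ V] (m : ℕ)
    (L : Submodule ℝ (V × Alt V (m + 1))) : Submodule ℝ V :=
  Submodule.map (LinearMap.fst ℝ V (Alt V (m + 1))) L

/-- The projection `pr₂(L) ⊆ ∧^{m+1}V^*` of a subspace `L ⊆ V ⊕ ∧^{m+1}V^*`. -/
def pr2S (V : Type*) [AddCommGroup V] [Module ℝ V] (m : ℕ)
    (L : Submodule ℝ (V × Alt V (m + 1))) : Submodule ℝ (Alt V (m + 1)) :=
  Submodule.map (LinearMap.snd ℝ V (Alt V (m + 1))) L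

/-- `L ∩ V`, viewed as a subspace of `V` (identifying `V` with `V ⊕ 0`). -/
def capV (V : Type*) [AddCommGroup V] [Module ℝ V] (m : ℕ)
    (L : Submodule ℝ (V × Alt V (m + 1))) : Submodule ℝ V :=
  Submodule.comap (LinearMap.inl ℝ V (Alt V (m + 1))) L

/-- `L ∩ ∧^{m+1}V^*`, viewed as a subspace of `∧^{m+1}V^*`
(identifying `∧^{m+1}V^*` with `0 ⊕ ∧^{m+1}V^*`). -/
def capF (V : Type*) [AddCommGroup V] [Module ℝ V] (m : ℕ)
    (L : Submodule ℝ (V × Alt V (m + 1))) : Submodule ℝ (Alt V (m + 1)) :=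
  Submodule.comap (LinearMap.inr ℝ V (Alt V (m + 1))) L

/-- The graph `gr(ω) = {(X, i_X ω) : X ∈ V}` of `ω ∈ ∧^{m+2}V^*`. -/
def grOmega (V : Type*) [AddCommGroup V] [Module ℝ V] (m : ℕ) (ω : Alt V (m + 2)) :
    Submodule ℝ (V × Alt V (m + 1)) :=
  LinearMap.range (LinearMap.prod LinearMap.id ω.curryLeft)

/-- `L` is weakly lagrangian if it is isotropic and `L ∩ V = pr₂(L)°`. -/
def IsWeaklyLagrangian (V : Type*) [AddCommGroup V] [Module ℝ V] (m : ℕ)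
    (L : Submodule ℝ (V × Alt V (m + 1))) : Prop :=
  IsIsotropic V m L ∧ capV V m L = polarS V m (pr2S V m L)


/-- For `E ⊆ V`, `A ⊆ Ann(E)` and an `E`-skew linear map
`ε : E → (∧^k V^*)/A`, the set `L(E,A,ε)` is an isotropic subspace of `V ⊕ ∧^k V^*`.
(Here the `k` of the statement is `m + 1`.) -/
theorem stmt_0 {V : Type*} [AddCommGroup V] [Module ℝ V] [FiniteDimensional ℝ V]
    (m : ℕ) (hmn : m + 1 ≤ finrank ℝ V - 1)
    (E : Submodule ℝ V) (A : Submodule ℝ (Alt V (m + 1))) (hA : A ≤ AnnE V m E)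
    (ε : E →ₗ[ℝ] (Alt V (m + 1) ⧸ A))
    (hskew : ∀ (X Y : E) (α β : Alt V (m + 1)),
      Submodule.Quotient.mk α = ε X → Submodule.Quotient.mk β = ε Y →
      iprod V m (Y : V) α = - iprod V m (X : V) β) :
    ∃ L : Submodule ℝ (V × Alt V (m + 1)),
      (L : Set (V × Alt V (m + 1))) =
        {p | ∃ h : p.1 ∈ E, Submodule.Quotient.mk p.2 = ε ⟨p.1, h⟩} ∧
      IsIsotropic V m L := by
  refine ⟨{
    carrier := {p | ∃ h : p.1 ∈ E, Submodule.Quotient.mk p.2 = ε ⟨p.1, h⟩}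
    add_mem' := ?_
    zero_mem' := ?_
    smul_mem' := ?_ }, rfl, ?_⟩
  · rintro p q ⟨hp, hp'⟩ ⟨hq, hq'⟩
    refine ⟨E.add_mem hp hq, ?_⟩
    rw [Prod.snd_add, Submodule.Quotient.mk_add, hp', hq', ← map_add]
    rfl
  · exact ⟨E.zero_mem, (map_zero ε).symm⟩
  · rintro c p ⟨hp, hp'⟩
    refine ⟨E.smul_mem c hp, ?_⟩
    rw [Prod.smul_snd, Submodule.Quotient.mk_smul, hp', ← map_smul]
    rfl
  · rintro u ⟨hu, hu'⟩ v ⟨hv, hv'⟩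
    -- Skewness at `(u.1, v.1)` says exactly that the two terms of the pairing cancel.
    have h : iprod V m v.1 u.2 = -iprod V m u.1 v.2 :=
      hskew ⟨u.1, hu⟩ ⟨v.1, hv⟩ u.2 v.2 hu' hv'
    rw [pairW, h, add_neg_cancel]

end
end

section
/- Let L ⊆ V ⊕ ∧^k V* be an isotropic subspace, and set E := pr₁(L) and A := L ∩ ∧^k V*. Then: (i) A ⊆ Ann(E); (ii) there exists a unique linear map ε : E → (∧^k V*)/A such that L = {(X,α) ∈ V ⊕ ∧^k V* : X ∈ E and α + A = ε(X)}; and (iii) ε is E-skew, i.e., for all X, Y ∈ E and all α, β ∈ ∧^k V* with α + A = ε(X) and β + A = ε(Y), one has i_Y α = − i_X β. -/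
/-!
The subspace `L` meets the fibre over each `X ∈ E` in a coset of `A`, so choosing any point of the
fibre and passing to the quotient by `A` gives a map `ε : E → (∧^k V^*)/A` that does not depend on
the choice. Independence of the choice (`mk_eq_of_mem`) yields linearity, the description of `L`
and uniqueness. Isotropy only enters through the two identities `⟨(0,α),(X,β)⟩ = i_X α` and
`⟨(X,α),(Y,β)⟩ = i_X β + i_Y α`, whose vanishing on `L` gives `A ⊆ Ann(E)` and skewness.
-/

open Module Submodule

noncomputable section

/-- Two points of `L` over the same vector differ by an element of `L ∩ ∧^{m+1}V^*`. -/
lemma mk_eq_of_mem {V : Type*} [AddCommGroup V] [Module ℝ V] {m : ℕ}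
    {L : Submodule ℝ (V × Alt V (m + 1))} {X : V} {α β : Alt V (m + 1)}
    (hα : (X, α) ∈ L) (hβ : (X, β) ∈ L) :
    (Submodule.Quotient.mk α : Alt V (m + 1) ⧸ capF V m L) = Submodule.Quotient.mk β := by
  rw [Submodule.Quotient.eq]
  simpa [capF] using L.sub_mem hα hβ

lemma exists_mem_of_mem_pr1 {V : Type*} [AddCommGroup V] [Module ℝ V] {m : ℕ}
    {L : Submodule ℝ (V × Alt V (m + 1))} (X : pr1 V m L) :
    ∃ α : Alt V (m + 1), ((X : V), α) ∈ L := by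
  obtain ⟨_, ⟨X, α⟩, h, rfl⟩ := X
  exact ⟨α, h⟩

/-- The map `ε : E → (∧^{m+1}V^*)/A` sending `X` to the class of any `α` with `(X, α) ∈ L`. -/
def fibreMap (V : Type*) [AddCommGroup V] [Module ℝ V] (m : ℕ)
    (L : Submodule ℝ (V × Alt V (m + 1))) :
    pr1 V m L →ₗ[ℝ] (Alt V (m + 1) ⧸ capF V m L) where
  toFun X := Submodule.Quotient.mk (exists_mem_of_mem_pr1 X).choose
  map_add' X Y := by
    rw [← Submodule.Quotient.mk_add]
    exact mk_eq_of_mem (exists_mem_of_mem_pr1 (X + Y)).choose_spec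
      (L.add_mem (exists_mem_of_mem_pr1 X).choose_spec (exists_mem_of_mem_pr1 Y).choose_spec)
  map_smul' c X := by
    rw [RingHom.id_apply, ← Submodule.Quotient.mk_smul]
    exact mk_eq_of_mem (exists_mem_of_mem_pr1 (c • X)).choose_spec
      (L.smul_mem c (exists_mem_of_mem_pr1 X).choose_spec)

lemma fibreMap_apply_of_mem {V : Type*} [AddCommGroup V] [Module ℝ V] {m : ℕ}
    {L : Submodule ℝ (V × Alt V (m + 1))} (X : pr1 V m L) {α : Alt V (m + 1)}
    (hα : ((X : V), α) ∈ L) : fibreMap V m L X = Submodule.Quotient.mk α :=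
  mk_eq_of_mem (exists_mem_of_mem_pr1 X).choose_spec hα

/-- For an isotropic `L ⊆ V ⊕ ∧^k V^*`, with `E = pr₁(L)` and
`A = L ∩ ∧^k V^*`: (i) `A ⊆ Ann(E)`; (ii) there is a unique linear map
`ε : E → (∧^k V^*)/A` whose "graph" is `L`; (iii) any such `ε` is `E`-skew.
(Here the `k` of the statement is `m + 1`.) -/
theorem stmt_1 {V : Type*} [AddCommGroup V] [Module ℝ V] [FiniteDimensional ℝ V]
    (m : ℕ) (hmn : m + 1 ≤ finrank ℝ V - 1)
    (L : Submodule ℝ (V × Alt V (m + 1))) (hL : IsIsotropic V m L) :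
    capF V m L ≤ AnnE V m (pr1 V m L) ∧
    (∃! ε : (pr1 V m L) →ₗ[ℝ] (Alt V (m + 1) ⧸ capF V m L),
      (L : Set (V × Alt V (m + 1))) =
        {p | ∃ h : p.1 ∈ pr1 V m L, Submodule.Quotient.mk p.2 = ε ⟨p.1, h⟩}) ∧
    (∀ ε : (pr1 V m L) →ₗ[ℝ] (Alt V (m + 1) ⧸ capF V m L),
      (L : Set (V × Alt V (m + 1))) =
        {p | ∃ h : p.1 ∈ pr1 V m L, Submodule.Quotient.mk p.2 = ε ⟨p.1, h⟩} →
      ∀ (X Y : pr1 V m L) (α β : Alt V (m + 1)),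
        Submodule.Quotient.mk α = ε X → Submodule.Quotient.mk β = ε Y →
        iprod V m (Y : V) α = - iprod V m (X : V) β) := by
  refine ⟨?_, ⟨fibreMap V m L, ?_, ?_⟩, ?_⟩
  · rintro α hα X hX
    obtain ⟨β, hβ⟩ := exists_mem_of_mem_pr1 ⟨X, hX⟩
    simpa [pairW, iprod] using hL (0, α) hα (X, β) hβ
  · ext ⟨X, α⟩
    constructor
    · intro h
      exact ⟨⟨(X, α), h, rfl⟩, (fibreMap_apply_of_mem ⟨X, ⟨(X, α), h, rfl⟩⟩ h).symm⟩
    · rintro ⟨hX, h⟩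
      obtain ⟨β, hβ⟩ := exists_mem_of_mem_pr1 ⟨X, hX⟩
      rw [fibreMap_apply_of_mem _ hβ, Submodule.Quotient.eq] at h
      have h0 : ((0 : V), α - β) ∈ L := h
      simpa using L.add_mem h0 hβ
  · intro ε hε
    ext X
    obtain ⟨α, hα⟩ := exists_mem_of_mem_pr1 X
    have h := hα
    rw [← SetLike.mem_coe, hε] at h
    obtain ⟨_, h⟩ := h
    rw [fibreMap_apply_of_mem X hα]
    exact h.symm
  · intro ε hε X Y α β hα hβ
    have hX : ((X : V), α) ∈ L := by
      rw [← SetLike.mem_coe, hε]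
      exact ⟨X.2, hα⟩
    have hY : ((Y : V), β) ∈ L := by
      rw [← SetLike.mem_coe, hε]
      exact ⟨Y.2, hβ⟩
    exact eq_neg_of_add_eq_zero_right (hL _ hX _ hY)

end
end

section
/- Let L ⊆ V ⊕ ∧^k V* be an isotropic subspace with pr₁(L) ≠ {0}. Then dim pr₂(L) ≤ dim pr₁(L) + C(n−1, k), where C(n−1,k) is the binomial coefficient (n−1 choose k). -/
/-!
Write `k = m + 1` and `n = dim V`. Since `dim pr₂(L) ≤ dim L`, it suffices to embed `L` into
`pr₁(L) ⊕ ∧^k H^*` for a hyperplane `H`, because `∧^k H^*` has dimension `C(n-1, k)`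
(`finrank_alt`). Fix `(X, ξ) ∈ L` with `X ≠ 0` and let `H` be a complement of the line `ℝ X`.
The map `(Y, α) ↦ (Y, α|_H)` has trivial kernel on `L`: if `(0, α) ∈ L`, pairing with `(X, ξ)` gives
`i_X α = 0`, and a form killed by `i_X` is determined by its restriction to `H`
(`eq_zero_of_iprod_eq_zero`).
-/

open Module Submodule

noncomputable section

/-- Only additive monoid structures are assumed, since subtraction comes from the real scalars;
so no compatibility between the group and module instances on spaces of forms is needed. -/
lemma injective_of_map_eq_zero {M N : Type*} [AddCommMonoid M] [AddCommMonoid N] [Module ℝ M]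
    [Module ℝ N] (g : M →ₗ[ℝ] N) (h : ∀ w, g w = 0 → w = 0) : Function.Injective g := by
  letI := Module.addCommMonoidToAddCommGroup ℝ (M := M)
  letI := Module.addCommMonoidToAddCommGroup ℝ (M := N)
  exact (injective_iff_map_eq_zero g).mpr h

instance finite_alt (V : Type*) [AddCommGroup V] [Module ℝ V] [FiniteDimensional ℝ V] (k : ℕ) :
    FiniteDimensional ℝ (Alt V k) :=
  Module.Finite.equiv (M := Module.Dual ℝ (⋀[ℝ]^k V))
    exteriorPower.alternatingMapLinearEquiv.symm

lemma finrank_alt (V : Type*) [AddCommGroup V] [Module ℝ V] [FiniteDimensional ℝ V] (k : ℕ) :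
    finrank ℝ (Alt V k) = Nat.choose (finrank ℝ V) k := by
  have e : Alt V k ≃ₗ[ℝ] Module.Dual ℝ (⋀[ℝ]^k V) := exteriorPower.alternatingMapLinearEquiv
  rw [e.finrank_eq, Subspace.dual_finrank_eq, exteriorPower.finrank_eq]

/-- By antisymmetry, `i_X α = 0` makes `α` vanish as soon as any one argument, not just the
first, is a multiple of `X`. -/
lemma apply_eq_zero_of_iprod_eq_zero {V : Type*} [AddCommGroup V] [Module ℝ V] {m : ℕ} {X : V}
    {α : Alt V (m + 1)} (h : iprod V m X α = 0) (v : Fin (m + 1) → V) (i : Fin (m + 1)) (c : ℝ)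
    (hv : v i = c • X) : α v = 0 := by
  have h0 : ∀ w : Fin (m + 1) → V, w 0 = c • X → α w = 0 := by
    intro w hw
    have h1 : iprod V m (c • X) α = 0 := by rw [iprod_smul_left, h, smul_zero]
    have h2 : iprod V m (c • X) α (Fin.tail w) = α (Matrix.vecCons (c • X) (Fin.tail w)) := rfl
    have h3 : Matrix.vecCons (c • X) (Fin.tail w) = w := by
      rw [← hw]
      exact Fin.cons_self_tail w
    rw [h1, h3] at h2
    exact h2.symm
  by_cases hi : i = 0
  · exact h0 v (hi ▸ hv)
  · have h1 := α.map_swap v (Ne.symm hi)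
    rw [h0 _ (by simpa using hv)] at h1
    exact neg_eq_zero.mp h1.symm

/-- Decompose each argument along `V = H ⊕ ℝ X` and expand multilinearly: every term with some
argument in `ℝ X` vanishes, and the remaining term has all its arguments in `H`. -/
lemma eq_zero_of_iprod_eq_zero {V : Type*} [AddCommGroup V] [Module ℝ V] {m : ℕ} {X : V}
    {α : Alt V (m + 1)} (h : iprod V m X α = 0) {H : Submodule ℝ V} (hH : H ⊔ ℝ ∙ X = ⊤)
    (hα : ∀ v : Fin (m + 1) → H, α (fun i => (v i : V)) = 0) : α = 0 := by
  ext v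
  have hd : ∀ i, ∃ (y : H) (c : ℝ), (y : V) + c • X = v i := by
    intro i
    have hi : v i ∈ H ⊔ ℝ ∙ X := hH ▸ mem_top
    obtain ⟨y, hy, z, hz, hyz⟩ := mem_sup.mp hi
    obtain ⟨c, rfl⟩ := mem_span_singleton.mp hz
    exact ⟨⟨y, hy⟩, c, hyz⟩
  choose y c hyc using hd
  have hv : v = (fun i => (y i : V)) + fun i => c i • X := funext fun i => (hyc i).symm
  rw [hv, α.map_add_univ, AlternatingMap.zero_apply]
  refine Finset.sum_eq_zero fun s _ => ?_
  by_cases hs : s = Finset.univ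
  · rw [hs, Finset.piecewise_univ]
    exact hα y
  · obtain ⟨i, hi⟩ : ∃ i, i ∉ s := by
      by_contra! hall
      exact hs (Finset.eq_univ_of_forall hall)
    exact apply_eq_zero_of_iprod_eq_zero h _ i (c i) (Finset.piecewise_eq_of_notMem _ _ _ hi)

/-- If `L ⊆ V ⊕ ∧^k V^*` is isotropic with `pr₁(L) ≠ {0}`, then
`dim pr₂(L) ≤ dim pr₁(L) + C(n-1, k)`. (Here the `k` of the statement is `m + 1`.) -/
theorem stmt_2 {V : Type*} [AddCommGroup V] [Module ℝ V] [FiniteDimensional ℝ V]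
    (m : ℕ) (hmn : m + 1 ≤ finrank ℝ V - 1)
    (L : Submodule ℝ (V × Alt V (m + 1))) (hL : IsIsotropic V m L)
    (hE : pr1 V m L ≠ ⊥) :
    finrank ℝ (pr2S V m L) ≤
      finrank ℝ (pr1 V m L) + Nat.choose (finrank ℝ V - 1) (m + 1) := by
  obtain ⟨X, hX, hX0⟩ := exists_mem_ne_zero_of_ne_bot hE
  obtain ⟨⟨X', ξ⟩, hξ, rfl⟩ := mem_map.mp hX
  change X' ≠ 0 at hX0
  obtain ⟨H, hH⟩ := Submodule.exists_isCompl (ℝ ∙ X')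
  have hHdim : finrank ℝ H = finrank ℝ V - 1 := by
    have h1 := finrank_add_eq_of_isCompl hH
    rw [finrank_span_singleton hX0] at h1
    omega
  have hpr2 : finrank ℝ (pr2S V m L) ≤ finrank ℝ L := finrank_map_le _ _
  -- The map `(Y, α) ↦ (Y, α|_H)` is injective on `L`.
  let r : Alt V (m + 1) →ₗ[ℝ] Alt H (m + 1) :=
    { toFun := fun α => α.compLinearMap H.subtype
      map_add' := fun α β => by ext; simp
      map_smul' := fun a α => by ext; simp }
  let g : L →ₗ[ℝ] (pr1 V m L) × Alt H (m + 1) :=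
    ((LinearMap.fst ℝ V (Alt V (m + 1))).submoduleMap L).prod
      (r.comp ((LinearMap.snd ℝ V (Alt V (m + 1))).comp L.subtype))
  have hg : Function.Injective g := by
    refine injective_of_map_eq_zero g ?_
    rintro ⟨⟨Y, α⟩, hYα⟩ hgu
    obtain ⟨h1, h2⟩ := Prod.mk.inj hgu
    have hY : Y = 0 := congrArg Subtype.val h1
    subst hY
    have hi : iprod V m X' α = 0 := by
      have h3 := hL _ hξ _ hYα
      simpa [pairW, iprod] using h3
    have hα : α = 0 := eq_zero_of_iprod_eq_zero hi (by rw [sup_comm]; exact hH.sup_eq_top)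
      fun v => DFunLike.congr_fun h2 v
    subst hα
    rfl
  have hle := LinearMap.finrank_le_finrank_of_injective hg
  rw [Module.finrank_prod, finrank_alt, hHdim] at hle
  exact hpr2.trans hle

end
end

section
/- Let E ⊆ V be a subspace. Then Ann(E)° = E if and only if dim E ≤ n − k or dim E = n. Moreover, if n − k < dim E < n, then Ann(E) = {0} and hence Ann(E)° = V ⊋ E. -/
/-!
Forms annihilated by `E` are the pullbacks of forms on `V ⧸ E`, a space of dimension `n - dim E`.
If `dim E ≤ n - k`, every nonzero vector of `V ⧸ E` is the first of `k` independent ones, and a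
determinant form dual to these shows that a vector outside `E` is not in `Ann(E)°`
(`exists_annE_iprod_ne_zero`). If `dim E > n - k`, any `k` vectors of `V` are linearly dependent
modulo `E`, so a form in `Ann(E)` vanishes on them (`annE_eq_bot`), and `Ann(E)° = 0° = V`.
-/

open Module Submodule

noncomputable section

lemma iprod_apply {V : Type*} [AddCommGroup V] [Module ℝ V] (m : ℕ) (X : V)
    (α : Alt V (m + 1)) (v : Fin m → V) : iprod V m X α v = α (Fin.cons X v) := rfl

/-- Membership in `Ann(E)` only constrains the first argument; antisymmetry transports the
vanishing to any other slot. -/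
lemma annE_apply_eq_zero {V : Type*} [AddCommGroup V] [Module ℝ V] {m : ℕ}
    {E : Submodule ℝ V} {α : Alt V (m + 1)} (hα : α ∈ AnnE V m E)
    (v : Fin (m + 1) → V) (i : Fin (m + 1)) (hi : v i ∈ E) : α v = 0 := by
  have h0 : ∀ w : Fin (m + 1) → V, w 0 ∈ E → α w = 0 := by
    intro w hw
    have h := congrArg (fun β : Alt V m => β (Fin.tail w)) (hα (w 0) hw)
    simpa [iprod_apply, Fin.cons_self_tail] using h
  by_cases h : i = 0
  · exact h0 v (h ▸ hi)
  · have h1 := α.map_swap v h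
    rw [h0 (v ∘ Equiv.swap i 0) (by simpa using hi)] at h1
    exact neg_eq_zero.mp h1.symm

lemma le_polarS_annE {V : Type*} [AddCommGroup V] [Module ℝ V] (m : ℕ)
    (E : Submodule ℝ V) : E ≤ polarS V m (AnnE V m E) :=
  fun X hX _ hα => hα X hX

lemma annE_eq_bot {V : Type*} [AddCommGroup V] [Module ℝ V] [FiniteDimensional ℝ V] {m : ℕ}
    {E : Submodule ℝ V} (h : finrank ℝ (V ⧸ E) < m + 1) : AnnE V m E = ⊥ := by
  rw [eq_bot_iff]
  intro α hα
  rw [mem_bot]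
  ext v
  have hdep : ¬ LinearIndependent ℝ (fun i => E.mkQ (v i)) := fun hli => by
    have := hli.fintype_card_le_finrank
    rw [Fintype.card_fin] at this
    omega
  obtain ⟨g, hg, i, hi⟩ := Fintype.not_linearIndependent_iff.mp hdep
  have hmem : ∑ j, g j • v j ∈ E := by
    rw [← ker_mkQ E, LinearMap.mem_ker, map_sum]
    simpa using hg
  -- Replacing `v i` by the combination lying in `E` multiplies the value by `g i`: every other
  -- term of the expansion has a repeated argument.
  have hz : α (Function.update v i (∑ j, g j • v j)) = 0 :=
    annE_apply_eq_zero hα _ i (by simpa using hmem)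
  rw [α.map_update_sum, Finset.sum_eq_single i] at hz
  · rw [α.map_update_smul, Function.update_eq_self, smul_eq_mul] at hz
    simpa [hi] using hz
  · intro j _ hj
    rw [α.map_update_smul, α.map_update_self v hj.symm, smul_zero]
  · simp

lemma exists_linearIndependent_zero_eq {Q : Type*} [AddCommGroup Q] [Module ℝ Q]
    [FiniteDimensional ℝ Q] {x : Q} (hx : x ≠ 0) :
    ∀ m : ℕ, m + 1 ≤ finrank ℝ Q →
      ∃ w : Fin (m + 1) → Q, LinearIndependent ℝ w ∧ w 0 = x
  | 0, _ =>
    have : Subsingleton (Fin (0 + 1)) := inferInstanceAs (Subsingleton (Fin 1))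
    ⟨fun _ => x, LinearIndependent.of_subsingleton 0 hx, rfl⟩
  | m + 1, h => by
    obtain ⟨w, hw, h0⟩ := exists_linearIndependent_zero_eq hx m (by omega)
    obtain ⟨y, hy⟩ := exists_linearIndependent_snoc_of_lt_finrank hw (by omega)
    exact ⟨_, hy, by rw [← h0]; exact Fin.snoc_castSucc (α := fun _ => Q) y w 0⟩

lemma exists_annE_iprod_ne_zero {V : Type*} [AddCommGroup V] [Module ℝ V]
    [FiniteDimensional ℝ V] {m : ℕ} {E : Submodule ℝ V} (h : m + 1 ≤ finrank ℝ (V ⧸ E))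
    {X : V} (hX : X ∉ E) : ∃ α ∈ AnnE V m E, iprod V m X α ≠ 0 := by
  have hx : E.mkQ X ≠ 0 := by simpa using hX
  obtain ⟨w, hw, h0⟩ := exists_linearIndependent_zero_eq hx m h
  obtain ⟨g, hg⟩ := LinearMap.exists_leftInverse_of_injective
    (Fintype.linearCombination ℝ w) (LinearMap.ker_eq_bot.mpr
      hw.fintypeLinearCombination_injective)
  have hgw : ∀ i, g (w i) = Pi.single i (1 : ℝ) := fun i => by
    have := LinearMap.congr_fun hg (Pi.single i (1 : ℝ))
    simpa [Fintype.linearCombination_apply_single] using this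
  choose u hu using fun i => E.mkQ_surjective (w i)
  let α : Alt V (m + 1) :=
    (Pi.basisFun ℝ (Fin (m + 1))).det.compLinearMap (g ∘ₗ E.mkQ)
  refine ⟨α, ?_, ?_⟩
  · intro Y hY
    ext v
    have hY0 : E.mkQ Y = 0 := by simpa using hY
    refine AlternatingMap.map_coord_zero (Pi.basisFun ℝ (Fin (m + 1))).det
      (0 : Fin (m + 1)) ?_
    change g (E.mkQ Y) = 0
    rw [hY0, map_zero]
  · intro hzero
    have h1 := congrArg (fun β : Alt V m => β (Fin.tail u)) hzero
    -- `X` together with lifts of the remaining `w i` is mapped to the standard basis.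
    have h2 : (fun i => (g ∘ₗ E.mkQ) ((Fin.cons X (Fin.tail u) : Fin (m + 1) → V) i)) =
        Pi.basisFun ℝ (Fin (m + 1)) := by
      funext i
      rw [Pi.basisFun_apply, ← hgw i]
      refine Fin.cases ?_ (fun j => ?_) i
      · simp [← h0]
      · simp [Fin.tail, ← hu]
    have h3 : iprod V m X α (Fin.tail u) = 1 := by
      change (Pi.basisFun ℝ (Fin (m + 1))).det (fun i => (g ∘ₗ E.mkQ) _) = 1
      exact (congrArg _ h2).trans (Basis.det_self _)
    exact one_ne_zero (h3.symm.trans h1)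

/-- For a subspace `E ⊆ V`: `Ann(E)° = E` iff `dim E ≤ n - k` or
`dim E = n`; moreover if `n - k < dim E < n` then `Ann(E) = {0}`, hence
`Ann(E)° = V ⊋ E`. (Here the `k` of the statement is `m + 1`.) -/
theorem stmt_4 {V : Type*} [AddCommGroup V] [Module ℝ V] [FiniteDimensional ℝ V]
    (m : ℕ) (hmn : m + 1 ≤ finrank ℝ V - 1)
    (E : Submodule ℝ V) :
    (polarS V m (AnnE V m E) = E ↔
      finrank ℝ E ≤ finrank ℝ V - (m + 1) ∨ finrank ℝ E = finrank ℝ V) ∧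
    (finrank ℝ V - (m + 1) < finrank ℝ E → finrank ℝ E < finrank ℝ V →
      AnnE V m E = ⊥ ∧ polarS V m (AnnE V m E) = ⊤ ∧ E ≠ ⊤) := by
  have hq := E.finrank_quotient_add_finrank
  have hbig : finrank ℝ V - (m + 1) < finrank ℝ E →
      AnnE V m E = ⊥ ∧ polarS V m (AnnE V m E) = ⊤ := fun h => by
    have hb : AnnE V m E = ⊥ := annE_eq_bot (by omega)
    refine ⟨hb, eq_top_iff.mpr fun X _ α hα => ?_⟩
    rw [hb, mem_bot] at hα
    rw [hα, map_zero]
  refine ⟨⟨fun h => ?_, ?_⟩, fun h1 h2 => ⟨(hbig h1).1, (hbig h1).2, ?_⟩⟩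
  · by_contra! hc
    rw [(hbig hc.1).2] at h
    exact hc.2 (by rw [← h, finrank_top])
  · rintro (h | h)
    · refine le_antisymm (fun X hX => ?_) (le_polarS_annE m E)
      by_contra hXE
      obtain ⟨α, hα, hne⟩ := exists_annE_iprod_ne_zero (m := m) (by omega) hXE
      exact hne (hX α hα)
    · refine le_antisymm ?_ (le_polarS_annE m E)
      rw [Submodule.eq_top_of_finrank_eq h]
      exact le_top
  · rintro rfl
    rw [finrank_top] at h2
    exact h2.false

end
end

section
/- Let ω ∈ ∧^{k+1} V* be an alternating (k+1)-form. Then its graph gr(ω) := {(X, i_X ω) : X ∈ V} is a lagrangian subspace of V ⊕ ∧^k V*, i.e., gr(ω) = gr(ω)⊥. -/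
/-!
Since `i_Y i_X ω = -i_X i_Y ω`, the graph of `ω` is isotropic. Conversely, if `(X, α)` is
orthogonal to every `(Y, i_Y ω)`, then `i_Y α = -i_X i_Y ω = i_Y i_X ω` for all `Y`; a form of
positive degree is determined by its contractions, so `α = i_X ω`.
-/

open Module Submodule

noncomputable section

/-- Interior products anticommute: `i_X i_Y ω + i_Y i_X ω = 0`. -/
lemma iprod_iprod_add_swap {V : Type*} [AddCommGroup V] [Module ℝ V] (m : ℕ) (X Y : V)
    (ω : Alt V (m + 2)) :
    iprod V m X (ω.curryLeft Y) + iprod V m Y (ω.curryLeft X) = 0 := by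
  -- polarize `i_Z i_Z ω = 0` at `Z = X + Y`
  have h := ω.curryLeft_same (X + Y)
  simp only [map_add, AlternatingMap.curryLeft_add, LinearMap.add_apply,
    AlternatingMap.curryLeft_same, zero_add, add_zero] at h
  exact h

/-- The graph `gr(ω) = {(X, i_X ω) : X ∈ V}` of an alternating
`(k+1)`-form `ω` is a lagrangian subspace of `V ⊕ ∧^k V^*`.
(Here the `k` of the statement is `m + 1`.) -/
theorem stmt_5 {V : Type*} [AddCommGroup V] [Module ℝ V] [FiniteDimensional ℝ V]
    (m : ℕ) (hmn : m + 1 ≤ finrank ℝ V - 1)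
    (ω : Alt V (m + 2)) :
    grOmega V m ω = perpW V m (grOmega V m ω) := by
  ext ⟨X, α⟩
  constructor
  · rintro ⟨Z, hZ⟩ _ ⟨Y, rfl⟩
    rw [← hZ]
    exact iprod_iprod_add_swap m Z Y ω
  · intro h
    refine ⟨X, Prod.ext rfl ?_⟩
    ext v
    have hY := h (v 0, ω.curryLeft (v 0)) ⟨v 0, rfl⟩
    -- `α` and `i_X ω` have the same contraction with the first argument `v 0`
    have key : iprod V m (v 0) α = iprod V m (v 0) (ω.curryLeft X) :=
      add_left_cancel (hY.trans (iprod_iprod_add_swap m X (v 0) ω).symm)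
    have e : ∀ β : Alt V (m + 1), iprod V m (v 0) β (Fin.tail v) = β v := fun β =>
      congrArg β (Fin.cons_self_tail v)
    exact ((e _).symm.trans (congrArg (fun γ => γ (Fin.tail v)) key.symm)).trans (e α)

end
end

section
/- Let L ⊆ V ⊕ ∧^k V* be a lagrangian subspace (L = L⊥) such that L ∩ ∧^k V* = {0}. Then pr₁(L) = V; consequently there exists an alternating (k+1)-form ω ∈ ∧^{k+1} V* such that L = {(X, i_X ω) : X ∈ V}. -/
/-!
A lagrangian `L` with `L ∩ ∧^k V^* = 0` projects injectively to `V`, so it is the graph of a linear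
map `φ` from `E = pr₁(L)` to `∧^k V^*`, and isotropy of `L` says that `i_X φ(Y)` is skew in
`X, Y ∈ E`. Such a `φ` is always of the form `X ↦ i_X ω` on `E`, for some `ω ∈ ∧^{k+1} V^*` on all
of `V` (`exists_curryLeft_eq`): this is proved by adding one spanning vector `x` of `E` at a time.
After subtracting the form already found, `φ` vanishes on the previous span, and
`φ(x) ∈ ∧^k V^*` is killed by contraction with every vector of the new span; then `ξ ∧ φ(x)`, with
`ξ` a covector vanishing on the previous span and `ξ(x) = 1`, is the correction needed
(`curryLeft_wedge`).

Hence `L ⊆ gr(ω)`. Since `gr(ω)` is isotropic, `gr(ω) ⊆ gr(ω)^⊥ ⊆ L^⊥ = L`, so `L = gr(ω)`, and in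
particular `pr₁(L) = V`.
-/

open Module Submodule

noncomputable section

/-- The wedge product `ξ ∧ θ` of a covector and an alternating form. -/
def wedge {V : Type*} [AddCommGroup V] [Module ℝ V] {m : ℕ} (ξ : V →ₗ[ℝ] ℝ) (θ : Alt V m) :
    Alt V (m + 1) :=
  AlternatingMap.alternatizeUncurryFin (ξ.smulRight θ)

/-- If `θ` vanishes as soon as one argument is `X` (that is, `i_X θ = 0`), then
`i_X (ξ ∧ θ) = ξ(X) θ`. -/
lemma curryLeft_wedge {V : Type*} [AddCommGroup V] [Module ℝ V] {m : ℕ} (ξ : V →ₗ[ℝ] ℝ)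
    (θ : Alt V m) (X : V) (h : ∀ (v : Fin m → V) (i : Fin m), v i = X → θ v = 0) :
    (wedge ξ θ).curryLeft X = ξ X • θ := by
  ext w
  rw [AlternatingMap.curryLeft_apply_apply, wedge, AlternatingMap.alternatizeUncurryFin_apply,
    Fin.sum_univ_succ]
  rw [Finset.sum_eq_zero, add_zero]
  · simp
  · intro j _
    cases m with
    | zero => exact j.elim0
    | succ m =>
      have : θ (j.succ.removeNth (Matrix.vecCons X w)) = 0 :=
        h _ 0 (by simp [Fin.removeNth])
      simp [this]

/-- A linear map `ψ : V → ∧^m V^*` with `i_X ψ(X) = 0` for all `X ∈ E = span s` agrees on `E` with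
`X ↦ i_X β` for some `β`. The condition `i_X ψ(X) = 0` is phrased through arguments equal to `X`, so
that it also makes sense for `m = 0`. -/
lemma exists_curryLeft_eq {V : Type*} [AddCommGroup V] [Module ℝ V] {m : ℕ}
    (ψ : V →ₗ[ℝ] Alt V m) (s : Finset V)
    (h : ∀ (v : Fin m → V) (i : Fin m), v i ∈ span ℝ (s : Set V) → ψ (v i) v = 0) :
    ∃ β : Alt V (m + 1), ∀ X ∈ span ℝ (s : Set V), β.curryLeft X = ψ X := by
  classical
  induction s using Finset.induction_on with
  | empty =>
    refine ⟨0, fun X hX => ?_⟩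
    have : X = 0 := by simpa using hX
    simp [this]
  | insert x s _ ih =>
    have hle : span ℝ (s : Set V) ≤ span ℝ ((insert x s : Finset V) : Set V) :=
      span_mono (by simp)
    have hxs : x ∈ span ℝ ((insert x s : Finset V) : Set V) := subset_span (by simp)
    obtain ⟨β, hβ⟩ := ih fun v i hi => h v i (hle hi)
    by_cases hx : x ∈ span ℝ (s : Set V)
    · refine ⟨β, fun X hX => hβ X ?_⟩
      rwa [Finset.coe_insert, span_insert_eq_span hx] at hX
    · obtain ⟨f, hfx, hf⟩ := exists_dual_map_eq_bot_of_notMem hx inferInstance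
      have hf0 : ∀ z ∈ span ℝ (s : Set V), f z = 0 := fun z hz => by
        have : f z ∈ (span ℝ (s : Set V)).map f := mem_map_of_mem hz
        simpa [hf] using this
      set ξ : V →ₗ[ℝ] ℝ := (f x)⁻¹ • f with hξ
      have hξx : ξ x = 1 := by simp [hξ, hfx]
      have hξ0 : ∀ z ∈ span ℝ (s : Set V), ξ z = 0 := fun z hz => by simp [hξ, hf0 z hz]
      set χ : V →ₗ[ℝ] Alt V m := ψ - β.curryLeft with hχ
      have hχ0 : ∀ z ∈ span ℝ (s : Set V), χ z = 0 := fun z hz => by simp [hχ, hβ z hz]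
      have hχa : ∀ (v : Fin m → V) (i : Fin m),
          v i ∈ span ℝ ((insert x s : Finset V) : Set V) → χ (v i) v = 0 := fun v i hi => by
        have hb : β (Matrix.vecCons (v i) v) = 0 :=
          β.map_eq_zero_of_eq (i := 0) (j := i.succ) _ (by simp) (Fin.succ_ne_zero i).symm
        simp [hχ, h v i hi, hb]
      have hx0 : ∀ (v : Fin m → V) (i : Fin m), χ x (Function.update v i x) = 0 := fun v i => by
        simpa using hχa (Function.update v i x) i (by simpa using hxs)
      -- polarization: apply `hχa` to `x + z`, using `χ (x + z) = χ x`
      have hz0 : ∀ z ∈ span ℝ (s : Set V), ∀ (v : Fin m → V) (i : Fin m),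
          χ x (Function.update v i z) = 0 := fun z hz v i => by
        have := hχa (Function.update v i (x + z)) i
          (by simpa using add_mem hxs (hle hz))
        simpa [hχ0 z hz, hx0] using this
      have hθ : ∀ (v : Fin m → V) (i : Fin m),
          v i ∈ span ℝ ((insert x s : Finset V) : Set V) → χ x v = 0 := fun v i hi => by
        rw [Finset.coe_insert, mem_span_insert] at hi
        obtain ⟨a, z, hz, hv⟩ := hi
        rw [← Function.update_eq_self i v, hv, AlternatingMap.map_update_add,
          AlternatingMap.map_update_smul, hx0, hz0 z hz]
        simp
      refine ⟨β + wedge ξ (χ x), fun X hX => ?_⟩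
      have hw := curryLeft_wedge ξ (χ x) X fun v i hi => hθ v i (hi ▸ hX)
      rw [Finset.coe_insert, mem_span_insert] at hX
      obtain ⟨a, z, hz, rfl⟩ := hX
      have h1 : χ (a • x + z) = ξ (a • x + z) • χ x := by
        simp [hχ0 z hz, hξ0 z hz, hξx]
      rw [AlternatingMap.curryLeft_add, LinearMap.add_apply, hw, ← h1, hχ, LinearMap.sub_apply]
      abel

/-- If `i_X α = 0`, then `α` vanishes as soon as any argument, not only the first, is `X`. -/
lemma apply_eq_zero_of_iprod {V : Type*} [AddCommGroup V] [Module ℝ V] {m : ℕ}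
    {α : Alt V (m + 1)} {v : Fin (m + 1) → V} (i : Fin (m + 1))
    (h : iprod V m (v i) α = 0) : α v = 0 := by
  have h1 : α (Matrix.vecCons (v i) (i.removeNth v)) = 0 := congrArg (fun g => g (i.removeNth v)) h
  rw [← Fin.insertNth_self_removeNth i v, AlternatingMap.map_insertNth, h1, smul_zero]

/-- Graphs of forms are isotropic. -/
lemma pairW_curryLeft {V : Type*} [AddCommGroup V] [Module ℝ V] {m : ℕ} (ω : Alt V (m + 2))
    (X Y : V) : pairW V m (X, ω.curryLeft X) (Y, ω.curryLeft Y) = 0 := by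
  have hs : ∀ Z : V, iprod V m Z (ω.curryLeft Z) = 0 := fun Z =>
    ω.curryLeft_same Z
  have h := hs (X + Y)
  simp only [map_add, iprod_add_left, hs, zero_add, add_zero] at h
  rw [add_comm] at h
  exact h

/-- A lagrangian `L ⊆ V ⊕ ∧^k V^*` with `L ∩ ∧^k V^* = {0}`
satisfies `pr₁(L) = V` and is the graph of an alternating `(k+1)`-form.
(Here the `k` of the statement is `m + 1`.) -/
theorem stmt_6 {V : Type*} [AddCommGroup V] [Module ℝ V] [FiniteDimensional ℝ V]
    (m : ℕ) (hmn : m + 1 ≤ finrank ℝ V - 1)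
    (L : Submodule ℝ (V × Alt V (m + 1)))
    (hlag : L = perpW V m L) (hcap : capF V m L = ⊥) :
    pr1 V m L = ⊤ ∧ ∃ ω : Alt V (m + 2), L = grOmega V m ω := by
  have hiso : ∀ u ∈ L, ∀ v ∈ L, pairW V m u v = 0 := fun u hu v hv => by
    rw [hlag] at hu
    exact hu v hv
  have hker : LinearMap.ker ((LinearMap.fst ℝ V (Alt V (m + 1))).domRestrict L) = ⊥ := by
    rw [LinearMap.ker_eq_bot']
    rintro ⟨⟨X, α⟩, hl⟩ hX
    obtain rfl : X = 0 := hX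
    have : α ∈ capF V m L := hl
    rw [hcap, mem_bot] at this
    simp [this]
  -- `g` inverts `pr₁ : L → pr₁(L)`, and `ψ` extends `φ : pr₁(L) → ∧^k V^*` to `V`
  obtain ⟨g, hg⟩ := LinearMap.exists_leftInverse_of_injective (K := ℝ) (V := L) (V' := V) _ hker
  let ψ : V →ₗ[ℝ] Alt V (m + 1) := LinearMap.snd ℝ V (Alt V (m + 1)) ∘ₗ L.subtype ∘ₗ g
  have hψ : ∀ l ∈ L, ψ l.1 = l.2 := fun l hl => by
    have : g l.1 = ⟨l, hl⟩ := LinearMap.congr_fun hg ⟨l, hl⟩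
    simp [ψ, this]
  obtain ⟨s, hs⟩ := IsNoetherian.noetherian (pr1 V m L)
  obtain ⟨ω, hω⟩ := exists_curryLeft_eq ψ s (by
    intro v i hi
    rw [hs] at hi
    obtain ⟨l, hl, hlv⟩ := hi
    have hlv : l.1 = v i := hlv
    refine apply_eq_zero_of_iprod i ?_
    rw [← hlv, hψ l hl]
    have h2 : iprod V m l.1 l.2 + iprod V m l.1 l.2 = 0 := hiso l hl l hl
    rwa [← two_smul ℝ, smul_eq_zero_iff_right two_ne_zero] at h2)
  rw [hs] at hω
  have hLω : ∀ l ∈ L, l = (l.1, ω.curryLeft l.1) := fun l hl =>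
    Prod.ext rfl (by rw [hω l.1 ⟨l, hl, rfl⟩, hψ l hl])
  have hωL : ∀ X : V, (X, ω.curryLeft X) ∈ L := fun X => by
    rw [hlag]
    intro l hl
    rw [hLω l hl]
    exact pairW_curryLeft ω X l.1
  refine ⟨eq_top_iff.2 fun X _ => ⟨_, hωL X, rfl⟩, ω, le_antisymm ?_ ?_⟩
  · exact fun l hl => ⟨l.1, (hLω l hl).symm⟩
  · rintro _ ⟨X, rfl⟩
    exact hωL X

end
end

section
/- Let L ⊆ V ⊕ ∧^k V* be a weakly lagrangian subspace. Then L ∩ V = {0} if and only if there exist a subspace S ⊆ ∧^k V* with S° = {0} and a linear map Λ : S → V satisfying i_{Λ(α)} β = − i_{Λ(β)} α for all α, β ∈ S, such that L = {(Λ(α), α) : α ∈ S}. -/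
/-!
`L ∩ V` is the kernel of `pr₂` restricted to `L`, so it vanishes exactly when `L` is the graph of a
linear map `Λ` on `S = pr₂(L)`, namely `Λ = pr₁ ∘ (pr₂|_L)⁻¹`. Skew-symmetry of `Λ` is then the
isotropy of `L`, and `S° = L ∩ V = 0` is the weakly lagrangian condition.
-/

open Module Submodule

noncomputable section

/-- A weakly lagrangian `L ⊆ V ⊕ ∧^k V^*` satisfies `L ∩ V = {0}`
iff it is the graph `{(Λ(α), α) : α ∈ S}` of a linear map `Λ : S → V` with
`S° = {0}` and `i_{Λ(α)} β = - i_{Λ(β)} α`. (Here the `k` of the statement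
is `m + 1`.) -/
theorem stmt_9 {V : Type*} [AddCommGroup V] [Module ℝ V] [FiniteDimensional ℝ V]
    (m : ℕ) (hmn : m + 1 ≤ finrank ℝ V - 1)
    (L : Submodule ℝ (V × Alt V (m + 1))) (hwl : IsWeaklyLagrangian V m L) :
    capV V m L = ⊥ ↔
      ∃ (S : Submodule ℝ (Alt V (m + 1))) (lam : S →ₗ[ℝ] V),
        polarS V m S = ⊥ ∧
        (∀ α β : S, iprod V m (lam α) (β : Alt V (m + 1)) =
          - iprod V m (lam β) (α : Alt V (m + 1))) ∧
        L = LinearMap.range (LinearMap.prod lam S.subtype) := by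
  obtain ⟨hiso, hcap⟩ := hwl
  constructor
  · intro h0
    let f : L →ₗ[ℝ] Alt V (m + 1) := (LinearMap.snd ℝ V (Alt V (m + 1))).comp L.subtype
    have hf : Function.Injective f := by
      rintro ⟨⟨X, α⟩, hx⟩ ⟨⟨Y, β⟩, hy⟩ (rfl : α = β)
      have hXY : X - Y ∈ capV V m L := by
        have h : ((X - Y, α - α) : V × Alt V (m + 1)) ∈ L := L.sub_mem hx hy
        rwa [sub_self] at h
      rw [h0, Submodule.mem_bot, sub_eq_zero] at hXY
      subst hXY
      rfl
    let e := LinearEquiv.ofInjective f hf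
    have hS : LinearMap.range f = pr2S V m L := by
      simp only [f, LinearMap.range_comp, Submodule.range_subtype, pr2S]
    have he : ∀ α : LinearMap.range f, (e.symm α : V × Alt V (m + 1)).2 = α := fun α =>
      congrArg Subtype.val (e.apply_symm_apply α)
    refine ⟨LinearMap.range f,
      (LinearMap.fst ℝ V (Alt V (m + 1))).comp (L.subtype.comp e.symm.toLinearMap), ?_, ?_, ?_⟩
    · rw [hS, ← hcap, h0]
    · intro α β
      have h := hiso _ (e.symm α).2 _ (e.symm β).2
      rw [pairW, he, he] at h
      exact eq_neg_of_add_eq_zero_left h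
    · ext w
      constructor
      · intro hw
        refine ⟨e ⟨w, hw⟩, Prod.ext ?_ rfl⟩
        exact congrArg (fun l : L => (l : V × Alt V (m + 1)).1) (e.symm_apply_apply ⟨w, hw⟩)
      · rintro ⟨α, rfl⟩
        have hα : LinearMap.prod ((LinearMap.fst ℝ V (Alt V (m + 1))).comp
            (L.subtype.comp e.symm.toLinearMap)) (LinearMap.range f).subtype α
            = (e.symm α : V × Alt V (m + 1)) := Prod.ext rfl (he α).symm
        rw [hα]
        exact (e.symm α).2
  · rintro ⟨S, lam, -, -, rfl⟩
    rw [eq_bot_iff]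
    rintro X ⟨α, hα⟩
    have h2 : α = 0 := Subtype.ext (congrArg Prod.snd hα)
    have h1 : lam α = X := congrArg Prod.fst hα
    rw [Submodule.mem_bot, ← h1, h2, map_zero]

end
end

section
/- Let Λ : ∧^k V* → V be a linear map defined on the whole of ∧^k V* satisfying i_{Λ(α)} β = − i_{Λ(β)} α for all α, β ∈ ∧^k V*, and suppose Λ ≠ 0. Then k = 1 or k = n − 1. -/
/-!
In a basis `b` of `V`, let `e^c` be the wedge of the coordinate forms `b^{c 0}, …, b^{c m}`.
Let `2 ≤ k ≤ n - 2`, where `k = m + 1`; the claim is that `Λ = 0`.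

* `Λ(e^c) = 0` for injective `c` (`lam_wedgeCoord_eq_zero`). Its coefficient along `b (c a)`
  vanishes because `i_{Λ(e^c)} e^c = 0`. Its coefficient along `b j` with `j` outside `c` is
  read off from `i_{Λ(e^c)} e^d`, where `d` contains `j` and a second index `j'` outside `c`
  (there is room for both as `2 ≤ k ≤ n - 2`). The coefficient sits on a monomial which
  involves `b^{j'}`, whereas `b^{j'}` does not occur in `i_{Λ(e^d)} e^c`.
* For arbitrary `α`, skewness gives `i_{Λ(α)} e^d = - i_{Λ(e^d)} α = 0` for all injective `d`,
  which forces `Λ(α) = 0`. No spanning statement for the `e^c` is needed.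
-/


open Module Submodule

noncomputable section

/-- The form `b^{c 0} ∧ ⋯ ∧ b^{c (k-1)}`, normalized as the determinant of the coordinate
matrix `(b^{c i} (v j))`. -/
def wedgeCoord {V ι : Type*} [AddCommGroup V] [Module ℝ V] (b : Basis ι ℝ V) {k : ℕ}
    (c : Fin k → ι) : Alt V k :=
  Matrix.detRowAlternating.compLinearMap (LinearMap.pi fun i => b.coord (c i))

lemma wedgeCoord_apply {V ι : Type*} [AddCommGroup V] [Module ℝ V] (b : Basis ι ℝ V) {k : ℕ}
    (c : Fin k → ι) (v : Fin k → V) :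
    wedgeCoord b c v = Matrix.det (Matrix.of fun j i => b.coord (c i) (v j)) := rfl

lemma wedgeCoord_update {V ι : Type*} [AddCommGroup V] [Module ℝ V] (b : Basis ι ℝ V) {k : ℕ}
    (c : Fin k → ι) (hc : Function.Injective c) (a : Fin k) (x : V) :
    wedgeCoord b c (Function.update (fun i => b (c i)) a x) = b.coord (c a) x := by
  classical
  rw [wedgeCoord_apply]
  have h : (Matrix.of fun j i => b.coord (c i) (Function.update (fun i => b (c i)) a x j))
      = (1 : Matrix (Fin k) (Fin k) ℝ).updateRow a (fun i => b.coord (c i) x) := by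
    ext j i
    by_cases hj : j = a
    · subst hj; simp
    · simp [hj, Matrix.updateRow_ne, Matrix.one_apply, Finsupp.single_apply, hc.eq_iff]
  rw [h, ← Matrix.cramer_transpose_apply, Matrix.transpose_one, Matrix.cramer_one]
  rfl

/-- The skewness condition with `Λ(α)`, `Λ(β)` inserted in an arbitrary slot. -/
lemma skew_update {V : Type*} [AddCommGroup V] [Module ℝ V] {m : ℕ} {X Y : V}
    {α β : Alt V (m + 1)} (h : iprod V m X β = - iprod V m Y α)
    (v : Fin (m + 1) → V) (a : Fin (m + 1)) :
    β (Function.update v a X) = - α (Function.update v a Y) := by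
  have key : ∀ (γ : Alt V (m + 1)) (Z : V),
      γ (Function.update v a Z) = (-1 : ℤˣ) ^ (a : ℕ) • iprod V m Z γ (a.removeNth v) := by
    intro γ Z
    rw [← Fin.insertNth_removeNth, AlternatingMap.map_insertNth]
    rfl
  rw [key, key, h]
  simp

lemma lam_wedgeCoord_eq_zero {V ι : Type*} [AddCommGroup V] [Module ℝ V] [Fintype ι]
    (b : Basis ι ℝ V) {m : ℕ} (hm : 1 ≤ m) (hcard : m + 3 ≤ Fintype.card ι)
    (lam : Alt V (m + 1) →ₗ[ℝ] V)
    (hskew : ∀ α β : Alt V (m + 1),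
      iprod V m (lam α) β = - iprod V m (lam β) α)
    (c : Fin (m + 1) → ι) (hc : Function.Injective c) :
    lam (wedgeCoord b c) = 0 := by
  classical
  refine b.ext_elem fun j => ?_
  change b.coord j _ = b.repr 0 j
  rw [map_zero, Finsupp.zero_apply]
  by_cases hj : ∃ a, c a = j
  · obtain ⟨a, rfl⟩ := hj
    have h := skew_update (hskew (wedgeCoord b c) (wedgeCoord b c)) (fun i => b (c i)) a
    rw [wedgeCoord_update b c hc] at h
    linarith
  · push Not at hj
    obtain ⟨j', hj'⟩ : ∃ j', j' ∉ insert j (Finset.univ.image c) := by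
      by_contra! hall
      have h1 : Fintype.card ι ≤ (insert j (Finset.univ.image c)).card := by
        rw [← Finset.card_univ]
        exact Finset.card_le_card fun x _ => hall x
      have h2 := Finset.card_insert_le j (Finset.univ.image c)
      have h3 := Finset.card_image_le (s := Finset.univ) (f := c)
      simp only [Finset.card_univ, Fintype.card_fin] at h3
      omega
    simp only [Finset.mem_insert, Finset.mem_image, Finset.mem_univ, true_and, not_or,
      not_exists] at hj'
    obtain ⟨hjj, hj'⟩ := hj'
    let l : Fin (m + 1) := ⟨1, by omega⟩
    have hl : l ≠ 0 := by simp [l, Fin.ext_iff]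
    let d : Fin (m + 1) → ι := Function.update (Function.update c 0 j) l j'
    have hd0 : d 0 = j := by simp [d, hl.symm]
    have hdl : d l = j' := by simp [d]
    have hd : Function.Injective d := by
      intro x y hxy
      have := @hc x y
      simp only [d, Function.update_apply] at hxy
      grind
    have h := skew_update (hskew (wedgeCoord b c) (wedgeCoord b d)) (fun i => b (d i)) 0
    rw [wedgeCoord_update b d hd, hd0] at h
    rw [h, neg_eq_zero, wedgeCoord_apply]
    -- The row of `b j'` vanishes, as no `c i` equals `j'`.
    refine Matrix.det_eq_zero_of_row_eq_zero l fun i => ?_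
    simp [hl, hdl, Ne.symm (hj' i)]

/-- If `Λ : ∧^k V^* → V` is defined on all of `∧^k V^*`, satisfies
`i_{Λ(α)} β = - i_{Λ(β)} α` and `Λ ≠ 0`, then `k = 1` or `k = n - 1`.
(Here the `k` of the statement is `m + 1`.) -/
theorem stmt_12 {V : Type*} [AddCommGroup V] [Module ℝ V] [FiniteDimensional ℝ V]
    (m : ℕ) (hmn : m + 1 ≤ finrank ℝ V - 1)
    (lam : Alt V (m + 1) →ₗ[ℝ] V)
    (hskew : ∀ α β : Alt V (m + 1),
      iprod V m (lam α) β = - iprod V m (lam β) α)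
    (hlam : lam ≠ 0) :
    m + 1 = 1 ∨ m + 1 = finrank ℝ V - 1 := by
  by_contra! hcon
  obtain ⟨h1, h2⟩ := hcon
  have hcard : m + 3 ≤ finrank ℝ V := by omega
  let b := finBasis ℝ V
  refine hlam (LinearMap.ext fun α => b.ext_elem fun j => ?_)
  change b.coord j _ = b.repr 0 j
  rw [map_zero, Finsupp.zero_apply]
  -- An injective index family whose first entry is `j`.
  let f : Fin (m + 1) → Fin (finrank ℝ V) := Fin.castLE (by omega)
  let d : Fin (m + 1) → Fin (finrank ℝ V) := fun i => Equiv.swap (f 0) j (f i)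
  have hd : Function.Injective d :=
    (Equiv.injective _).comp (Fin.castLE_injective _)
  have hd0 : d 0 = j := Equiv.swap_apply_left _ _
  have h := skew_update (hskew α (wedgeCoord b d)) (fun i => b (d i)) 0
  rw [wedgeCoord_update b d hd, hd0, lam_wedgeCoord_eq_zero b (by omega) (by simpa using hcard)
    lam hskew d hd, AlternatingMap.map_update_zero, neg_zero] at h
  exact h

end
end
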